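/- Let n ≥ 1 and let f : {0,1}^n → {0,1} be a local rule of width n. If f is conservative, then f is 1-balanced: ∑_{(x_1,…,x_n) ∈ {0,1}^n} f(x_1,…,x_n) = 2^{n−1}; that is, exactly half of all 2^n input configurations are mapped to 1. -/

import Mathlib

/-- A local rule `f` of width `n` is `L`-conservative if for every `L`-periodic
bisequence `x : ℤ → Fin 2`, the sum of `f` applied to the `n`-blocks starting at
positions `1,…,L` equals the sum of `x` over positions `1,…,L`. -/
def LCons (n : ℕ) (f : (Fin n → Fin 2) → Fin 2) (L : ℕ) : Prop :=
  ∀ x : ℤ → Fin 2, (∀ i : ℤ, x (i + L) = x i) →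
    (∑ i ∈ Finset.range L, (f (fun k => x ((i : ℤ) + 1 + (k : ℕ)))).val) =
      ∑ i ∈ Finset.range L, (x ((i : ℤ) + 1)).val

/-!
Fix a period `L ≥ n` and sum the conservation identity over all `2 ^ L` configurations on the cycle
`ZMod L`. At each of the `L` positions the window of `n` cells does not overlap itself, so every
block in `{0,1}^n` is read there by exactly `2 ^ (L - n)` configurations, while each cell equals `1`
in exactly `2 ^ (L - 1)` of them. Hence `L * 2 ^ (L - n) * ∑ f = L * 2 ^ (L - 1)`.
-/

open Finset

section Windows

variable {A M : Type*} [Fintype A] [AddCommMonoid M]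

theorem sum_comp_injective {κ ι : Type*} [Fintype κ] [Fintype ι] [DecidableEq κ] [DecidableEq ι]
    {e : κ → ι} (he : e.Injective) (g : (κ → A) → M) :
    ∑ y : ι → A, g (y ∘ e) =
      Fintype.card A ^ (Fintype.card ι - Fintype.card κ) • ∑ x, g x := by
  classical
  let split : κ ⊕ {i // i ∉ Set.range e} ≃ ι :=
    ((Equiv.ofInjective e he).sumCongr (Equiv.refl _)).trans (Equiv.sumCompl (· ∈ Set.range e))
  have card_outside : Fintype.card {i // i ∉ Set.range e} = Fintype.card ι - Fintype.card κ := by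
    rw [← Fintype.card_congr split, Fintype.card_sum, Nat.add_sub_cancel_left]
  calc ∑ y : ι → A, g (y ∘ e)
      = ∑ p : (κ → A) × ({i // i ∉ Set.range e} → A), g p.1 :=
        Fintype.sum_equiv ((split.symm.arrowCongr (Equiv.refl A)).trans
          (Equiv.sumArrowEquivProdArrow _ _ _)) _ _ fun _ ↦ rfl
    _ = Fintype.card A ^ (Fintype.card ι - Fintype.card κ) • ∑ x, g x := by
      simp only [Fintype.sum_prod_type, sum_const, card_univ, Fintype.card_fun, card_outside,
        ← smul_sum]

theorem add_natCast_zmod_injective {n L : ℕ} (hnL : n ≤ L) (a : ZMod L) :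
    Function.Injective fun k : Fin n ↦ a + ((k : ℕ) : ZMod L) := fun k l hkl ↦
  Fin.ext <| CharP.natCast_injOn_Iio (ZMod L) L (k.isLt.trans_le hnL) (l.isLt.trans_le hnL)
    (add_left_cancel hkl)

theorem sum_zmod_window {n L : ℕ} [NeZero L] (hnL : n ≤ L) (a : ZMod L)
    (g : (Fin n → A) → M) :
    ∑ y : ZMod L → A, g (fun k ↦ y (a + (k : ℕ))) = Fintype.card A ^ (L - n) • ∑ x, g x := by
  simpa only [Function.comp_def, ZMod.card, Fintype.card_fin] using
    sum_comp_injective (add_natCast_zmod_injective hnL a) g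

end Windows

theorem sum_val_apply_eq_two_pow {ι : Type*} [Fintype ι] [DecidableEq ι] (a : ι) :
    ∑ y : ι → Fin 2, (y a).val = 2 ^ (Fintype.card ι - 1) := by
  simpa using Fintype.sum_piFinset_apply (fun b : Fin 2 ↦ b.val) univ a

theorem LCons.sum_zmod {n L : ℕ} {f : (Fin n → Fin 2) → Fin 2} (hf : LCons n f L)
    (y : ZMod L → Fin 2) :
    ∑ i ∈ range L, (f fun k ↦ y (i + 1 + (k : ℕ))).val = ∑ i ∈ range L, (y (i + 1)).val := by
  simpa using hf (fun i ↦ y i) (by simp)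

theorem stmt_6_general {n L : ℕ} (hn : 1 ≤ n) (hnL : n ≤ L) {f : (Fin n → Fin 2) → Fin 2}
    (hf : LCons n f L) :
    (∑ x : Fin n → Fin 2, (f x).val) = 2 ^ (n - 1) := by
  have hL : 0 < L := hn.trans hnL
  have : NeZero L := ⟨hL.ne'⟩
  have double_count : L * (2 ^ (L - n) * ∑ x, (f x).val) = L * 2 ^ (L - 1) :=
    calc L * (2 ^ (L - n) * ∑ x, (f x).val)
        = ∑ i ∈ range L, ∑ y : ZMod L → Fin 2, (f fun k ↦ y (i + 1 + (k : ℕ))).val := by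
          simp [sum_zmod_window hnL _ fun x ↦ (f x).val]
      _ = ∑ y : ZMod L → Fin 2, ∑ i ∈ range L, (f fun k ↦ y (i + 1 + (k : ℕ))).val := sum_comm
      _ = ∑ y : ZMod L → Fin 2, ∑ i ∈ range L, (y (i + 1)).val :=
          sum_congr rfl fun y _ ↦ hf.sum_zmod y
      _ = ∑ i ∈ range L, ∑ y : ZMod L → Fin 2, (y (i + 1)).val := sum_comm
      _ = L * 2 ^ (L - 1) := by simp [sum_val_apply_eq_two_pow]
  have pow_split : 2 ^ (L - 1) = 2 ^ (L - n) * 2 ^ (n - 1) := by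
    rw [← pow_add, Nat.sub_add_sub_cancel hnL hn]
  rw [pow_split] at double_count
  exact Nat.eq_of_mul_eq_mul_left (Nat.two_pow_pos _) (Nat.eq_of_mul_eq_mul_left hL double_count)

/-- A conservative rule of width `n ≥ 1` is `1`-balanced: the sum of its values
over all `2^n` input blocks equals `2^(n-1)`. -/
theorem stmt_6 (n : ℕ) (hn : 1 ≤ n) (f : (Fin n → Fin 2) → Fin 2)
    (hf : ∀ L : ℕ, 0 < L → LCons n f L) :
    (∑ x : Fin n → Fin 2, (f x).val) = 2 ^ (n - 1) :=
  stmt_6_general hn le_rfl (hf n hn)
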